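/- arXiv:2512.10085 — 6 statements merged into one kernel-verified Lean document; each statement's English description precedes it below -/
import Mathlib

section
/- For every real number λ0 > 0 and every λ with 0 ≤ λ ≤ λ0, one has e^λ − 1 ≤ λ + θ0·λ², where θ0 = (e^{λ0} − 1 − λ0)/λ0². -/
/-!
Taylor's formula with integral remainder writes `f x - P x`, where `P` is the Taylor polynomial of
degree `n` at `a`, as `(x - a) ^ (n + 1)` times an integral of `f⁽ⁿ⁺¹⁾` with nonnegative weight over
the segment from `a` to `x`. Increasing `x` moves every point `a + t * (x - a)` of that segment to
the right, so the integral is increasing in `x` as soon as `f⁽ⁿ⁺¹⁾` is. For `f = exp`, `a = 0` and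
`n = 1` this says that `(exp x - 1 - x) / x ^ 2` is increasing on the whole real line.
-/

open scoped Nat
open Set

theorem intervalIntegrable_comp_add_mul_of_monotone {g : ℝ → ℝ} (hg : Monotone g) (a c u v : ℝ) :
    IntervalIntegrable (fun t ↦ g (a + t * c)) MeasureTheory.volume u v := by
  rcases le_total 0 c with hc | hc
  · exact Monotone.intervalIntegrable fun s t hst ↦ hg (by gcongr)
  · exact Antitone.intervalIntegrable fun s t hst ↦
      hg (add_le_add_right (mul_le_mul_of_nonpos_right hst hc) a)

/-- The normalized Taylor remainder `(f x - P x) / (x - a) ^ (n + 1)`, where `P` is the Taylor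
polynomial of degree `n` at `a` of a `C^(n + 1)` function `f`. It is encoded by its integral form,
which is also meaningful at `x = a`. -/
noncomputable def taylorQuotient (f : ℝ → ℝ) (n : ℕ) (a x : ℝ) : ℝ :=
  (n ! : ℝ)⁻¹ * ∫ t in (0 : ℝ)..1, (1 - t) ^ n * iteratedDeriv (n + 1) f (a + t * (x - a))

section TaylorQuotient

variable {f : ℝ → ℝ} {n : ℕ}

theorem sub_taylorWithinEval_eq_pow_mul_taylorQuotient (hf : ContDiff ℝ (n + 1) f) (a x : ℝ) :
    f x - taylorWithinEval f n univ a x = (x - a) ^ (n + 1) * taylorQuotient f n a x := by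
  have taylor := map_add_eq_sum_add_integral_iteratedFDeriv (x := a) (y := x - a)
    fun t _ ↦ hf.contDiffAt (x := a + t • (x - a))
  simp only [iteratedFDeriv_apply_eq_iteratedDeriv_mul_prod, Finset.prod_const, Finset.card_univ,
    Fintype.card_fin, smul_eq_mul, add_sub_cancel, mul_left_comm _ ((x - a) ^ (n + 1)),
    intervalIntegral.integral_const_mul] at taylor
  rw [taylor_within_apply, sub_eq_iff_eq_add', taylorQuotient]
  simpa only [iteratedDerivWithin_univ, smul_eq_mul, mul_assoc] using taylor

theorem monotone_taylorQuotient (hf : Monotone (iteratedDeriv (n + 1) f)) (a : ℝ) :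
    Monotone (taylorQuotient f n a) := by
  have integrable (x : ℝ) : IntervalIntegrable
      (fun t ↦ (1 - t) ^ n * iteratedDeriv (n + 1) f (a + t * (x - a)))
      MeasureTheory.volume 0 1 :=
    (intervalIntegrable_comp_add_mul_of_monotone hf a (x - a) 0 1).continuousOn_mul (by fun_prop)
  intro x y hxy
  refine mul_le_mul_of_nonneg_left ?_ (by positivity)
  refine intervalIntegral.integral_mono_on zero_le_one (integrable x) (integrable y) ?_
  rintro t ⟨ht0, ht1⟩
  exact mul_le_mul_of_nonneg_left (hf (by gcongr)) (pow_nonneg (sub_nonneg.2 ht1) n)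

theorem sub_taylorWithinEval_le_div_mul_pow {a x y : ℝ} (hn : Odd n)
    (hf : ContDiff ℝ (n + 1) f) (hmono : Monotone (iteratedDeriv (n + 1) f))
    (hy : y ≠ a) (hxy : x ≤ y) :
    f x - taylorWithinEval f n univ a x ≤
      (f y - taylorWithinEval f n univ a y) / (y - a) ^ (n + 1) * (x - a) ^ (n + 1) := by
  have hpow : (y - a) ^ (n + 1) ≠ 0 := pow_ne_zero _ (sub_ne_zero.2 hy)
  calc
    f x - taylorWithinEval f n univ a x = (x - a) ^ (n + 1) * taylorQuotient f n a x :=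
      sub_taylorWithinEval_eq_pow_mul_taylorQuotient hf a x
    _ ≤ (x - a) ^ (n + 1) * taylorQuotient f n a y :=
      mul_le_mul_of_nonneg_left (monotone_taylorQuotient hmono a hxy) (hn.add_one.pow_nonneg _)
    _ = (f y - taylorWithinEval f n univ a y) / (y - a) ^ (n + 1) * (x - a) ^ (n + 1) := by
      rw [sub_taylorWithinEval_eq_pow_mul_taylorQuotient hf, mul_div_cancel_left₀ _ hpow, mul_comm]

end TaylorQuotient

theorem iteratedDeriv_real_exp (n : ℕ) : iteratedDeriv n Real.exp = Real.exp := by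
  rw [iteratedDeriv_eq_iterate, Real.iter_deriv_exp]

theorem quartic_a_general {lam0 lam : ℝ} (hlam0 : lam0 ≠ 0) (hlam : lam ≤ lam0) :
    Real.exp lam - 1 ≤ lam + ((Real.exp lam0 - 1 - lam0) / lam0 ^ 2) * lam ^ 2 := by
  have hmono : Monotone (iteratedDeriv (1 + 1) Real.exp) := by
    simpa only [iteratedDeriv_real_exp] using Real.exp_monotone
  have remainder_le :=
    sub_taylorWithinEval_le_div_mul_pow odd_one Real.contDiff_exp hmono hlam0 hlam
  have taylor_one (x : ℝ) : taylorWithinEval Real.exp 1 univ 0 x = 1 + x := by simp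
  simp only [taylor_one, sub_zero, ← sub_sub, one_add_one_eq_two] at remainder_le
  exact sub_le_iff_le_add'.1 remainder_le

theorem quartic_a (lam0 : ℝ) (hlam0 : 0 < lam0) (lam : ℝ)
    (h1 : 0 ≤ lam) (h2 : lam ≤ lam0) :
    Real.exp lam - 1 ≤ lam + ((Real.exp lam0 - 1 - lam0) / lam0 ^ 2) * lam ^ 2 :=
  quartic_a_general hlam0.ne' h2
end

section
/- Let (Ω, μ) be a probability space and N : Ω → ℝ a measurable function with N ≥ 0 almost everywhere. Let λ0 > 0 be such that ω ↦ exp(λ0·N(ω)) is integrable, and set μ1 := E[N] and κ0 := (E[e^{λ0 N}] − 1 − λ0·μ1)/λ0². Then for every λ with 0 ≤ λ ≤ λ0, E[e^{λ N}] ≤ 1 + μ1·λ + κ0·λ². -/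
open MeasureTheory

/-!
For `x ≥ 0` the `n`-th Taylor remainder of `exp` is the power series `∑_{k ≥ n} x ^ k / k!` with
nonnegative terms. Scaling the argument by `s ∈ [0, 1]` multiplies the `k`-th term by
`s ^ k ≤ s ^ n`, so the remainder at `s x` is at most `s ^ n` times the remainder at `x`.
Integrating this with `s = t / u` and `x = u X` bounds the moment generating function at `t` by its
Taylor polynomial plus `(t / u) ^ n` times the remainder at `u`; the theorem is the case `n = 2`.
-/

/-- The remainder of the exponential series at `x` after its first `n` terms, that is, after the
Taylor polynomial of degree `n - 1`; for `n = 0` it is `exp x` itself. -/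
noncomputable def expRemainder (n : ℕ) (x : ℝ) : ℝ :=
  Real.exp x - ∑ i ∈ Finset.range n, x ^ i / i.factorial

theorem hasSum_expRemainder (n : ℕ) (x : ℝ) :
    HasSum (fun k : ℕ => x ^ (k + n) / (k + n).factorial) (expRemainder n x) := by
  have hasSum_exp : HasSum (fun k : ℕ => x ^ k / k.factorial) (Real.exp x) := by
    rw [Real.exp_eq_exp_ℝ]
    exact NormedSpace.expSeries_div_hasSum_exp x
  exact (hasSum_nat_add_iff' n).mpr hasSum_exp

theorem expRemainder_nonneg (n : ℕ) {x : ℝ} (hx : 0 ≤ x) : 0 ≤ expRemainder n x :=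
  sub_nonneg.mpr (Real.sum_le_exp_of_nonneg hx n)

theorem expRemainder_mul_le (n : ℕ) {s x : ℝ} (hs₀ : 0 ≤ s) (hs₁ : s ≤ 1) (hx : 0 ≤ x) :
    expRemainder n (s * x) ≤ s ^ n * expRemainder n x := by
  refine hasSum_le (fun k => ?_) (hasSum_expRemainder n (s * x))
    ((hasSum_expRemainder n x).mul_left (s ^ n))
  have pow_le : s ^ (k + n) ≤ s ^ n := pow_le_pow_of_le_one hs₀ hs₁ (Nat.le_add_left n k)
  rw [mul_pow, mul_div_assoc]
  gcongr

section Integral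

variable {Ω : Type*} [MeasurableSpace Ω] {μ : Measure Ω} {X : Ω → ℝ}

theorem integral_expRemainder_mul_le {n : ℕ} {s : ℝ} (hs₀ : 0 ≤ s) (hs₁ : s ≤ 1)
    (hX : ∀ᵐ ω ∂μ, 0 ≤ X ω) (hint : Integrable (fun ω => expRemainder n (X ω)) μ) :
    ∫ ω, expRemainder n (s * X ω) ∂μ ≤ s ^ n * ∫ ω, expRemainder n (X ω) ∂μ := by
  rw [← integral_const_mul]
  refine integral_mono_of_nonneg ?_ (hint.const_mul (s ^ n)) ?_
  · filter_upwards [hX] with ω hω using expRemainder_nonneg n (mul_nonneg hs₀ hω)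
  · filter_upwards [hX] with ω hω using expRemainder_mul_le n hs₀ hs₁ hω

theorem integrable_exp_mul_of_ae_nonneg_of_le {t u : ℝ} (hX : ∀ᵐ ω ∂μ, 0 ≤ X ω) (hu : u ≠ 0)
    (hint : Integrable (fun ω => Real.exp (u * X ω)) μ) (htu : t ≤ u) :
    Integrable (fun ω => Real.exp (t * X ω)) μ := by
  have hXmeas : AEMeasurable X μ :=
    Real.aemeasurable_of_aemeasurable_exp_mul hu hint.aemeasurable
  refine hint.mono' (by fun_prop) ?_
  filter_upwards [hX] with ω hω
  rw [Real.norm_of_nonneg (Real.exp_nonneg _)]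
  gcongr

theorem integrable_pow_of_ae_nonneg_of_integrable_exp_mul {u : ℝ} (hX : ∀ᵐ ω ∂μ, 0 ≤ X ω)
    (hu : 0 < u) (hint : Integrable (fun ω => Real.exp (u * X ω)) μ) (i : ℕ) :
    Integrable (fun ω => X ω ^ i) μ :=
  ProbabilityTheory.integrable_pow_of_integrable_exp_mul hu.ne' hint
    (integrable_exp_mul_of_ae_nonneg_of_le hX hu.ne' hint (neg_le_self hu.le)) i

theorem integrable_mul_pow_div {i : ℕ} (hpow : Integrable (fun ω => X ω ^ i) μ) (t c : ℝ) :
    Integrable (fun ω => (t * X ω) ^ i / c) μ := by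
  simp only [mul_pow]
  exact (hpow.const_mul _).div_const _

theorem integrable_expRemainder_mul {n : ℕ} {t : ℝ}
    (hint : Integrable (fun ω => Real.exp (t * X ω)) μ)
    (hpow : ∀ i ∈ Finset.range n, Integrable (fun ω => X ω ^ i) μ) :
    Integrable (fun ω => expRemainder n (t * X ω)) μ :=
  hint.sub (integrable_finsetSum _ fun i hi => integrable_mul_pow_div (hpow i hi) t _)

theorem integral_expRemainder_mul {n : ℕ} {t : ℝ}
    (hint : Integrable (fun ω => Real.exp (t * X ω)) μ)
    (hpow : ∀ i ∈ Finset.range n, Integrable (fun ω => X ω ^ i) μ) :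
    ∫ ω, expRemainder n (t * X ω) ∂μ =
      (∫ ω, Real.exp (t * X ω) ∂μ) -
        ∑ i ∈ Finset.range n, t ^ i / i.factorial * ∫ ω, X ω ^ i ∂μ := by
  have integral_term (i : ℕ) : ∫ ω, (t * X ω) ^ i / i.factorial ∂μ =
      t ^ i / i.factorial * ∫ ω, X ω ^ i ∂μ := by
    simp only [mul_pow, mul_div_right_comm, integral_const_mul]
  have integrable_term : ∀ i ∈ Finset.range n,
      Integrable (fun ω => (t * X ω) ^ i / i.factorial) μ := fun i hi =>
    integrable_mul_pow_div (hpow i hi) t _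
  simp only [expRemainder]
  rw [integral_sub hint (integrable_finsetSum _ integrable_term),
    integral_finsetSum _ integrable_term]
  simp only [integral_term]

theorem quartic_b_general (n : ℕ) {t u : ℝ} (hX : ∀ᵐ ω ∂μ, 0 ≤ X ω) (hu : 0 < u)
    (hint : Integrable (fun ω => Real.exp (u * X ω)) μ) (ht : 0 ≤ t) (htu : t ≤ u) :
    ∫ ω, Real.exp (t * X ω) ∂μ ≤
      ∑ i ∈ Finset.range n, t ^ i / i.factorial * ∫ ω, X ω ^ i ∂μ +
        (t / u) ^ n * ((∫ ω, Real.exp (u * X ω) ∂μ) -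
          ∑ i ∈ Finset.range n, u ^ i / i.factorial * ∫ ω, X ω ^ i ∂μ) := by
  have hpow : ∀ i ∈ Finset.range n, Integrable (fun ω => X ω ^ i) μ := fun i _ =>
    integrable_pow_of_ae_nonneg_of_integrable_exp_mul hX hu hint i
  have hint_t := integrable_exp_mul_of_ae_nonneg_of_le hX hu.ne' hint htu
  have huX : ∀ᵐ ω ∂μ, 0 ≤ u * X ω := hX.mono fun ω hω => mul_nonneg hu.le hω
  have remainder_le : ∫ ω, expRemainder n (t * X ω) ∂μ ≤
      (t / u) ^ n * ∫ ω, expRemainder n (u * X ω) ∂μ := by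
    simpa only [← mul_assoc, div_mul_cancel₀ t hu.ne'] using
      integral_expRemainder_mul_le (div_nonneg ht hu.le) ((div_le_one hu).mpr htu) huX
        (integrable_expRemainder_mul hint hpow)
  rw [integral_expRemainder_mul hint_t hpow, integral_expRemainder_mul hint hpow] at remainder_le
  exact sub_le_iff_le_add'.mp remainder_le

end Integral

theorem quartic_b {Ω : Type*} [MeasurableSpace Ω] (μ : Measure Ω)
    [IsProbabilityMeasure μ] (N : Ω → ℝ) (hNmeas : Measurable N)
    (hNpos : ∀ᵐ ω ∂μ, 0 ≤ N ω) (lam0 : ℝ) (hlam0 : 0 < lam0)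
    (hint : Integrable (fun ω => Real.exp (lam0 * N ω)) μ)
    (mu1 kappa0 : ℝ)
    (hmu1 : mu1 = ∫ ω, N ω ∂μ)
    (hkappa0 : kappa0 = ((∫ ω, Real.exp (lam0 * N ω) ∂μ) - 1 - lam0 * mu1) / lam0 ^ 2)
    (lam : ℝ) (h1 : 0 ≤ lam) (h2 : lam ≤ lam0) :
    (∫ ω, Real.exp (lam * N ω) ∂μ) ≤ 1 + mu1 * lam + kappa0 * lam ^ 2 := by
  refine (quartic_b_general 2 hNpos hlam0 hint h1 h2).trans_eq ?_
  simp only [Finset.sum_range_succ, Finset.sum_range_zero, pow_zero, pow_one, Nat.factorial_zero,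
    Nat.factorial_one, Nat.cast_one, integral_const, probReal_univ, one_smul, hkappa0, hmu1]
  ring
end

section
/- Let (Ω, μ) be a probability space and N : Ω → ℝ a measurable function with N ≥ 0 almost everywhere and N integrable. Then for all real numbers 0 < λ ≤ λ' such that ω ↦ exp(λ'·N(ω)) is integrable, one has (E[e^{λ N}] − 1 − λ·E[N])/λ² ≤ (E[e^{λ' N}] − 1 − λ'·E[N])/λ'², i.e., the parameter κ(λ) := (E[e^{λ N}] − 1 − λ·E[N])/λ² is nondecreasing in λ. -/
open MeasureTheory

/-!
For `s ≠ 0`, Taylor's formula with integral remainder gives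
`(exp (s * x) - 1 - s * x) / s ^ 2 = x ^ 2 * ∫ r in 0..1, (1 - r) * exp (r * s * x)`.
For `x ≥ 0` the right-hand side is nondecreasing in `s`, negative values included; take `x = N ω`
and integrate.
-/

theorem sq_mul_integral_one_sub_mul_exp (u : ℝ) :
    u ^ 2 * ∫ r in (0 : ℝ)..1, (1 - r) * Real.exp (r * u) = Real.exp u - 1 - u := by
  have hderiv (r : ℝ) : HasDerivAt (fun r ↦ (u * (1 - r) + 1) * Real.exp (r * u))
      (u ^ 2 * ((1 - r) * Real.exp (r * u))) r := by
    have hlinear : HasDerivAt (fun r ↦ u * (1 - r) + 1) (-u) r := by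
      simpa using (((hasDerivAt_id r).const_sub 1).const_mul u).add_const 1
    have hexp : HasDerivAt (fun r ↦ Real.exp (r * u)) (Real.exp (r * u) * u) r := by
      simpa using ((hasDerivAt_id r).mul_const u).exp
    exact (hlinear.mul hexp).congr_deriv (by ring)
  have hcont : Continuous fun r : ℝ ↦ u ^ 2 * ((1 - r) * Real.exp (r * u)) := by fun_prop
  rw [← intervalIntegral.integral_const_mul,
    intervalIntegral.integral_eq_sub_of_hasDerivAt (fun r _ ↦ hderiv r)
      (hcont.intervalIntegrable 0 1)]
  simp only [sub_self, mul_zero, zero_add, one_mul, sub_zero, mul_one, zero_mul, Real.exp_zero]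
  ring

theorem monotone_integral_one_sub_mul_exp :
    Monotone fun u : ℝ ↦ ∫ r in (0 : ℝ)..1, (1 - r) * Real.exp (r * u) := by
  intro u v huv
  have hcont (w : ℝ) : Continuous fun r : ℝ ↦ (1 - r) * Real.exp (r * w) := by fun_prop
  refine intervalIntegral.integral_mono_on zero_le_one ((hcont u).intervalIntegrable 0 1)
    ((hcont v).intervalIntegrable 0 1) fun r ⟨hr0, hr1⟩ ↦ ?_
  have : 0 ≤ 1 - r := sub_nonneg.mpr hr1
  gcongr

theorem exp_mul_sub_one_sub_mul_div_sq_eq {s : ℝ} (hs : s ≠ 0) (x : ℝ) :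
    (Real.exp (s * x) - 1 - s * x) / s ^ 2 =
      x ^ 2 * ∫ r in (0 : ℝ)..1, (1 - r) * Real.exp (r * (s * x)) := by
  rw [← sq_mul_integral_one_sub_mul_exp (s * x)]
  field_simp

theorem monotoneOn_exp_mul_sub_one_sub_mul_div_sq {x : ℝ} (hx : 0 ≤ x) :
    MonotoneOn (fun s : ℝ ↦ (Real.exp (s * x) - 1 - s * x) / s ^ 2) {0}ᶜ := by
  intro s hs t ht hst
  simp only [exp_mul_sub_one_sub_mul_div_sq_eq hs, exp_mul_sub_one_sub_mul_div_sq_eq ht]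
  gcongr
  exact monotone_integral_one_sub_mul_exp (by gcongr)

section Integral

variable {Ω : Type*} [MeasurableSpace Ω] {μ : Measure Ω} {N : Ω → ℝ} {s t : ℝ}

theorem integral_exp_mul_sub_one_sub_mul_div_sq_le (hN : ∀ᵐ ω ∂μ, 0 ≤ N ω)
    (hs : s ≠ 0) (ht : t ≠ 0) (hst : s ≤ t)
    (hint : Integrable (fun ω ↦ Real.exp (t * N ω) - 1 - t * N ω) μ) :
    (∫ ω, (Real.exp (s * N ω) - 1 - s * N ω) ∂μ) / s ^ 2 ≤
      (∫ ω, (Real.exp (t * N ω) - 1 - t * N ω) ∂μ) / t ^ 2 := by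
  rw [← integral_div, ← integral_div]
  refine integral_mono_of_nonneg (.of_forall fun ω ↦ ?_) (hint.div_const _) ?_
  · have hremainder : 0 ≤ Real.exp (s * N ω) - 1 - s * N ω := by
      linarith [Real.add_one_le_exp (s * N ω)]
    exact div_nonneg hremainder (sq_nonneg s)
  · filter_upwards [hN] with ω hω
    exact monotoneOn_exp_mul_sub_one_sub_mul_div_sq hω hs ht hst

theorem integrable_exp_mul_of_le_of_nonneg (hNmeas : AEStronglyMeasurable N μ)
    (hN : ∀ᵐ ω ∂μ, 0 ≤ N ω) (hst : s ≤ t) (hexp : Integrable (fun ω ↦ Real.exp (t * N ω)) μ) :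
    Integrable (fun ω ↦ Real.exp (s * N ω)) μ := by
  refine hexp.mono' (Real.continuous_exp.comp_aestronglyMeasurable (hNmeas.const_mul s)) ?_
  filter_upwards [hN] with ω hω
  rw [Real.norm_eq_abs, Real.abs_exp]
  gcongr

variable [IsFiniteMeasure μ]

theorem integrable_exp_mul_sub_one_sub_mul (hN : Integrable N μ)
    (hexp : Integrable (fun ω ↦ Real.exp (t * N ω)) μ) :
    Integrable (fun ω ↦ Real.exp (t * N ω) - 1 - t * N ω) μ :=
  (hexp.sub (integrable_const 1)).sub (hN.const_mul t)

theorem integral_exp_mul_sub_one_sub_mul (hN : Integrable N μ)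
    (hexp : Integrable (fun ω ↦ Real.exp (t * N ω)) μ) :
    ∫ ω, (Real.exp (t * N ω) - 1 - t * N ω) ∂μ =
      (∫ ω, Real.exp (t * N ω) ∂μ) - μ.real Set.univ - t * ∫ ω, N ω ∂μ := by
  have hexp_sub_one : Integrable (fun ω ↦ Real.exp (t * N ω) - 1) μ :=
    hexp.sub (integrable_const 1)
  rw [integral_sub hexp_sub_one (hN.const_mul t), integral_sub hexp (integrable_const 1),
    integral_const_mul, integral_const, smul_eq_mul, mul_one]

theorem kappa_monotone_general (hNpos : ∀ᵐ ω ∂μ, 0 ≤ N ω) (hNint : Integrable N μ)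
    (hs : s ≠ 0) (ht : t ≠ 0) (hst : s ≤ t)
    (hexp : Integrable (fun ω ↦ Real.exp (t * N ω)) μ) :
    ((∫ ω, Real.exp (s * N ω) ∂μ) - μ.real Set.univ - s * ∫ ω, N ω ∂μ) / s ^ 2 ≤
      ((∫ ω, Real.exp (t * N ω) ∂μ) - μ.real Set.univ - t * ∫ ω, N ω ∂μ) / t ^ 2 := by
  have hexp_s := integrable_exp_mul_of_le_of_nonneg hNint.aestronglyMeasurable hNpos hst hexp
  rw [← integral_exp_mul_sub_one_sub_mul hNint hexp_s,
    ← integral_exp_mul_sub_one_sub_mul hNint hexp]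
  exact integral_exp_mul_sub_one_sub_mul_div_sq_le hNpos hs ht hst
    (integrable_exp_mul_sub_one_sub_mul hNint hexp)

end Integral

theorem kappa_monotone {Ω : Type*} [MeasurableSpace Ω] (μ : Measure Ω)
    [IsProbabilityMeasure μ] (N : Ω → ℝ) (hNmeas : Measurable N)
    (hNpos : ∀ᵐ ω ∂μ, 0 ≤ N ω) (hNint : Integrable N μ)
    (lam lam' : ℝ) (hlam : 0 < lam) (hle : lam ≤ lam')
    (hint : Integrable (fun ω => Real.exp (lam' * N ω)) μ) :
    ((∫ ω, Real.exp (lam * N ω) ∂μ) - 1 - lam * ∫ ω, N ω ∂μ) / lam ^ 2 ≤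
      ((∫ ω, Real.exp (lam' * N ω) ∂μ) - 1 - lam' * ∫ ω, N ω ∂μ) / lam' ^ 2 := by
  simpa only [probReal_univ] using
    kappa_monotone_general hNpos hNint hlam.ne' (hlam.trans_le hle).ne' hle hint
end

section
/- Let q ≥ 2 be an integer and d > 0 a real number. Then the polynomial a_p(z) = z^q − z^{q−1} − d has a real root z0 satisfying 1 + d/(1+d)^{q−1} < z0 < 1 + d. -/
/-!
A root `z > 1` of `z ^ q - z ^ (q - 1) - d` is a solution of `z ^ n * (z - 1) = d` with `n = q - 1`,
so `z - 1 = d / z ^ n`. As `z ^ n > 1`, this gives `z < 1 + d`; inserting that bound back into the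
denominator gives `z - 1 > d / (1 + d) ^ n`.
-/

theorem lt_one_add_of_pow_mul_sub_one_eq {R : Type*} [Ring R] [LinearOrder R]
    [IsStrictOrderedRing R] {n : ℕ} {z d : R} (hn : n ≠ 0) (hz : 1 < z)
    (hzd : z ^ n * (z - 1) = d) : z < 1 + d := by
  have sub_one_lt : z - 1 < z ^ n * (z - 1) :=
    lt_mul_of_one_lt_left (sub_pos.mpr hz) (one_lt_pow₀ hz hn)
  exact sub_lt_iff_lt_add'.mp (hzd ▸ sub_one_lt)

theorem one_add_div_one_add_pow_lt_of_pow_mul_sub_one_eq {K : Type*} [Field K] [LinearOrder K]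
    [IsStrictOrderedRing K] {n : ℕ} {z d : K} (hn : n ≠ 0) (hz : 1 < z)
    (hzd : z ^ n * (z - 1) = d) : 1 + d / (1 + d) ^ n < z := by
  have z_pos : 0 < z := one_pos.trans hz
  have z_lt : z < 1 + d := lt_one_add_of_pow_mul_sub_one_eq hn hz hzd
  have d_pos : 0 < d := hzd ▸ mul_pos (pow_pos z_pos n) (sub_pos.mpr hz)
  refine lt_sub_iff_add_lt'.mp ?_
  calc
    d / (1 + d) ^ n < d / z ^ n :=
      div_lt_div_of_pos_left d_pos (pow_pos z_pos n) (pow_lt_pow_left₀ z_lt z_pos.le hn)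
    _ = z - 1 := by rw [← hzd, mul_div_cancel_left₀ _ (pow_pos z_pos n).ne']

theorem exists_one_lt_pow_mul_sub_one_eq (n : ℕ) {d : ℝ} (hd : 0 < d) :
    ∃ z : ℝ, 1 < z ∧ z ^ n * (z - 1) = d := by
  have one_le : 1 ≤ 1 + d := le_add_of_nonneg_right hd.le
  have continuousOn : ContinuousOn (fun z : ℝ ↦ z ^ n * (z - 1)) (Set.Icc 1 (1 + d)) := by
    fun_prop
  have le_right : d ≤ (1 + d) ^ n * (1 + d - 1) := by
    rw [add_sub_cancel_left]
    exact le_mul_of_one_le_left hd.le (one_le_pow₀ one_le)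
  have mem_Ioc : d ∈ Set.Ioc ((1 : ℝ) ^ n * (1 - 1)) ((1 + d) ^ n * (1 + d - 1)) :=
    ⟨by simpa using hd, le_right⟩
  obtain ⟨z, hz, hzd⟩ := intermediate_value_Ioc one_le continuousOn mem_Ioc
  exact ⟨z, hz.1, hzd⟩

theorem realproot (q : ℕ) (hq : 2 ≤ q) (d : ℝ) (hd : 0 < d) :
    ∃ z0 : ℝ, z0 ^ q - z0 ^ (q - 1) - d = 0 ∧
      1 + d / (1 + d) ^ (q - 1) < z0 ∧ z0 < 1 + d := by
  have hn : q - 1 ≠ 0 := by lia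
  obtain ⟨z, hz, hzd⟩ := exists_one_lt_pow_mul_sub_one_eq (q - 1) hd
  have is_root : z ^ q - z ^ (q - 1) - d = 0 := by
    rw [← pow_sub_one_mul (by lia : q ≠ 0) z, ← mul_sub_one, hzd, sub_self]
  exact ⟨z, is_root, one_add_div_one_add_pow_lt_of_pow_mul_sub_one_eq hn hz hzd,
    lt_one_add_of_pow_mul_sub_one_eq hn hz hzd⟩
end

section
/- Let q ≥ 2 be an integer and d > 0 a real number. Then the polynomial a_p(z) = z^q − z^{q−1} − d has no complex root z with 0 < arg(z) < π/(q−1). -/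
open Real

/-!
A root satisfies `z ^ (q - 1) * (z - 1) = d`. If `0 < arg z < π / (q - 1)`, then both factors lie in
the open upper half-plane, so their arguments add up to a number strictly between `0` and `2 * π`,
and the product cannot be a nonnegative real.
-/

theorem im_pow_eq_norm_pow_mul_sin (z : ℂ) (n : ℕ) :
    (z ^ n).im = ‖z‖ ^ n * sin (n * z.arg) := by
  have polar_form : z ^ n = (‖z‖ ^ n : ℝ) * Complex.exp ((n * z.arg : ℝ) * Complex.I) := by
    conv_lhs => rw [← Complex.norm_mul_exp_arg_mul_I z, mul_pow, ← Complex.exp_nat_mul]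
    push_cast
    rw [mul_assoc]
  rw [polar_form, Complex.im_ofReal_mul, Complex.exp_ofReal_mul_I_im]

theorem im_pow_pos {z : ℂ} {n : ℕ} (h_pos : 0 < n * z.arg) (h_lt : n * z.arg < π) :
    0 < (z ^ n).im := by
  have hz : z ≠ 0 := by
    rintro rfl
    simp at h_pos
  rw [im_pow_eq_norm_pow_mul_sin]
  exact mul_pos (pow_pos (norm_pos_iff.mpr hz) n) (sin_pos_of_pos_of_lt_pi h_pos h_lt)

theorem mul_ne_ofReal_of_im_pos {u w : ℂ} {d : ℝ} (hu : 0 < u.im) (hw : 0 < w.im) (hd : 0 ≤ d) :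
    u * w ≠ d := by
  intro h
  have hw_normSq : 0 < Complex.normSq w :=
    Complex.normSq_pos.mpr fun hw_zero => by simp [hw_zero] at hw
  have h_im : u.im * Complex.normSq w = -(d * w.im) := calc
    u.im * Complex.normSq w = (u * w * (starRingEnd ℂ) w).im := by
      rw [mul_assoc, Complex.mul_conj, Complex.im_mul_ofReal]
    _ = -(d * w.im) := by
      rw [h, Complex.im_ofReal_mul, Complex.conj_im, mul_neg]
  linarith [mul_pos hu hw_normSq, mul_nonneg hd hw.le]

theorem no_small_angle_root_general (q : ℕ) (hq : 2 ≤ q) (c : ℂ) (hc : c.im ≤ 0)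
    (d : ℝ) (hd : 0 ≤ d) :
    ¬ ∃ z : ℂ, z ^ q - c * z ^ (q - 1) - (d : ℂ) = 0 ∧
      0 < Complex.arg z ∧ Complex.arg z < π / (q - 1 : ℝ) := by
  obtain ⟨n, rfl⟩ : ∃ n, q = n + 1 := ⟨q - 1, by lia⟩
  rintro ⟨z, h_root, h_arg_pos, h_arg_lt⟩
  have hn : (1 : ℝ) ≤ n := by exact_mod_cast Nat.le_of_succ_le_succ hq
  have h_mul_arg_lt : n * z.arg < π := by
    rwa [Nat.cast_add_one, add_sub_cancel_right, lt_div_iff₀' (by linarith)] at h_arg_lt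
  have h_pow_im : 0 < (z ^ n).im := im_pow_pos (by positivity) h_mul_arg_lt
  have hz_im : 0 < z.im := by
    have h_arg_lt_pi : z.arg < π := (le_mul_of_one_le_left h_arg_pos.le hn).trans_lt h_mul_arg_lt
    simpa using im_pow_pos (z := z) (n := 1) (by simpa) (by simpa)
  have h_sub_im : 0 < (z - c).im := by
    rw [Complex.sub_im]
    linarith
  refine mul_ne_ofReal_of_im_pos h_pow_im h_sub_im hd ?_
  rw [Nat.add_sub_cancel] at h_root
  linear_combination h_root

theorem no_small_angle_root (q : ℕ) (hq : 2 ≤ q) (d : ℝ) (hd : 0 < d) :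
    ¬ ∃ z : ℂ, z ^ q - z ^ (q - 1) - (d : ℂ) = 0 ∧
      0 < Complex.arg z ∧ Complex.arg z < π / (q - 1 : ℝ) := by
  simpa only [one_mul] using no_small_angle_root_general q hq 1 (by simp) d hd.le
end

section
/- Let a, b, δ > 0 be real numbers, let e(x) = a·x³ + b·x² − δ·x, and set x_min := (√(b² + 3aδ) − b)/(3a). Then −δ²/(√(b² + 3aδ) + b) ≤ e(x_min) ≤ −δ²/(2·(√(b² + 3aδ) + b)). -/
/-!
Write `s = √(b² + 3aδ)` and `x = xmin`. Since `3ax = s - b`, the difference of squares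
`s² - b² = 3aδ` becomes `x(s + b) = δ`, so the two bounds are `-δx` and `-δx/2`.
The first differs from `e(x)` by `x²(ax + b)`. Substituting `δ = 3ax² + 2bx`, which is `e'(x) = 0`,
the second differs from `e(x)` by `(ax)x²/2`. Both differences have the right sign because
`3(ax + b) = s + 2b` and `3ax = s - b` are nonnegative.
-/

section OrderedRing

variable {R : Type*} [CommRing R] [LinearOrder R] [IsStrictOrderedRing R] {a b δ x : R}

theorem neg_mul_le_cubic (h : 0 ≤ a * x + b) :
    -(δ * x) ≤ a * x ^ 3 + b * x ^ 2 - δ * x := by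
  have excess_nonneg : 0 ≤ (a * x + b) * x ^ 2 := mul_nonneg h (sq_nonneg x)
  linear_combination excess_nonneg

theorem two_mul_cubic_le_neg_mul_of_deriv_eq_zero (hx : 3 * a * x ^ 2 + 2 * b * x - δ = 0)
    (h : 0 ≤ a * x) : 2 * (a * x ^ 3 + b * x ^ 2 - δ * x) ≤ -(δ * x) := by
  have gap_nonneg : 0 ≤ a * x * x ^ 2 := mul_nonneg h (sq_nonneg x)
  linear_combination gap_nonneg + x * hx

end OrderedRing

section Domain

variable {R : Type*} [CommRing R] [IsDomain R] {a b δ s x : R}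

theorem mul_add_eq_of_sq_eq (ha : 3 * a ≠ 0) (hs : s ^ 2 = b ^ 2 + 3 * a * δ)
    (hx : 3 * a * x = s - b) : x * (s + b) = δ := by
  refine mul_left_cancel₀ ha ?_
  calc
    3 * a * (x * (s + b)) = (s - b) * (s + b) := by rw [← mul_assoc, hx]
    _ = 3 * a * δ := by linear_combination hs

theorem cubic_deriv_eq_zero_of_sq_eq (ha : 3 * a ≠ 0) (hs : s ^ 2 = b ^ 2 + 3 * a * δ)
    (hx : 3 * a * x = s - b) : 3 * a * x ^ 2 + 2 * b * x - δ = 0 := by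
  linear_combination x * hx + mul_add_eq_of_sq_eq ha hs hx

end Domain

theorem neg_sq_div_eq_neg_mul {K : Type*} [Field K] {c δ x : K} (hc : c ≠ 0) (h : x * c = δ) :
    -δ ^ 2 / c = -(δ * x) := by
  rw [div_eq_iff hc]
  linear_combination δ * h

section Sqrt

variable {a b δ : ℝ}

theorem abs_lt_sqrt_sq_add (h : 0 < a * δ) : |b| < √(b ^ 2 + 3 * a * δ) := by
  rw [← Real.sqrt_sq_eq_abs]
  exact Real.sqrt_lt_sqrt (sq_nonneg b) (by linarith)

theorem neg_two_mul_le_sqrt_sq_add (h : 0 ≤ a * δ) (hb : -√(a * δ) ≤ b) :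
    -(2 * b) ≤ √(b ^ 2 + 3 * a * δ) := by
  rcases le_total 0 b with b_nonneg | b_nonpos
  · exact (by linarith : -(2 * b) ≤ 0).trans (Real.sqrt_nonneg _)
  · have sq_le : (-b) ^ 2 ≤ a * δ :=
      (Real.le_sqrt (neg_nonneg.2 b_nonpos) h).1 (neg_le.1 hb)
    exact Real.le_sqrt_of_sq_le (by linarith)

end Sqrt

theorem cubgen_b_general (a b δ : ℝ) (haδ : 0 < a * δ) (hb : -√(a * δ) ≤ b)
    (xmin : ℝ) (hxmin : xmin = (√(b ^ 2 + 3 * a * δ) - b) / (3 * a)) :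
    -δ ^ 2 / (√(b ^ 2 + 3 * a * δ) + b) ≤
      a * xmin ^ 3 + b * xmin ^ 2 - δ * xmin ∧
    a * xmin ^ 3 + b * xmin ^ 2 - δ * xmin ≤
      -δ ^ 2 / (2 * (√(b ^ 2 + 3 * a * δ) + b)) := by
  have three_a_ne : 3 * a ≠ 0 := mul_ne_zero three_ne_zero (left_ne_zero_of_mul haδ.ne')
  obtain ⟨neg_sqrt_lt, lt_sqrt⟩ := abs_lt.1 (abs_lt_sqrt_sq_add (b := b) haδ)
  have neg_two_mul_le := neg_two_mul_le_sqrt_sq_add haδ.le hb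
  have sq_eq : √(b ^ 2 + 3 * a * δ) ^ 2 = b ^ 2 + 3 * a * δ :=
    Real.sq_sqrt (by linarith [sq_nonneg b])
  set s := √(b ^ 2 + 3 * a * δ)
  have s_add_b_pos : 0 < s + b := by linarith
  have three_a_mul : 3 * a * xmin = s - b := by rw [hxmin, mul_div_cancel₀ _ three_a_ne]
  have lower_eq : -δ ^ 2 / (s + b) = -(δ * xmin) :=
    neg_sq_div_eq_neg_mul s_add_b_pos.ne' (mul_add_eq_of_sq_eq three_a_ne sq_eq three_a_mul)
  have deriv_eq_zero := cubic_deriv_eq_zero_of_sq_eq three_a_ne sq_eq three_a_mul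
  rw [mul_comm 2 (s + b), ← div_div, lower_eq, le_div_iff₀' two_pos]
  exact ⟨neg_mul_le_cubic (by linarith),
    two_mul_cubic_le_neg_mul_of_deriv_eq_zero deriv_eq_zero (by linarith)⟩

theorem cubgen_b (a b δ : ℝ) (ha : 0 < a) (hb : 0 < b) (hδ : 0 < δ)
    (xmin : ℝ) (hxmin : xmin = (Real.sqrt (b ^ 2 + 3 * a * δ) - b) / (3 * a)) :
    -δ ^ 2 / (Real.sqrt (b ^ 2 + 3 * a * δ) + b) ≤
      a * xmin ^ 3 + b * xmin ^ 2 - δ * xmin ∧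
    a * xmin ^ 3 + b * xmin ^ 2 - δ * xmin ≤
      -δ ^ 2 / (2 * (Real.sqrt (b ^ 2 + 3 * a * δ) + b)) :=
  cubgen_b_general a b δ (mul_pos ha hδ)
    ((neg_nonpos.2 (Real.sqrt_nonneg _)).trans hb.le) xmin hxmin
end
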